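/- arXiv:2601.07535 — 3 statements merged into one kernel-verified Lean document; each statement's English description precedes it below -/
import Mathlib

section
/- (Lemma A.1, type I error of CLUSTER.) Under the single-round CLUSTER construction described in the context, the probability that there exist i ≠ j in [N] with μ_i = μ_j such that i and j lie in different connected components of the random graph G is at most δ'. -/
open MeasureTheory ProbabilityTheory Finset

noncomputable section

/-- The kernel `g(x,y) = ⟪φ x, φ y⟫` associated with the feature map `φ`. -/
def kerG {𝒳 H : Type*} [NormedAddCommGroup H] [InnerProductSpace ℝ H]
    (φ : 𝒳 → H) (x y : 𝒳) : ℝ :=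
  inner ℝ (φ x) (φ y)

/-- The supremum `ḡ = sup_{x,y} g(x,y)` of the kernel. -/
def kerSup {𝒳 H : Type*} [NormedAddCommGroup H] [InnerProductSpace ℝ H]
    (φ : 𝒳 → H) : ℝ :=
  ⨆ p : 𝒳 × 𝒳, kerG φ p.1 p.2

/-- The range `g̃ = sup_{x,y} g(x,y) − inf_{x,y} g(x,y)` of the kernel. -/
def kerRange {𝒳 H : Type*} [NormedAddCommGroup H] [InnerProductSpace ℝ H]
    (φ : 𝒳 → H) : ℝ :=
  (⨆ p : 𝒳 × 𝒳, kerG φ p.1 p.2) - (⨅ p : 𝒳 × 𝒳, kerG φ p.1 p.2)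

/-- The kernel mean embedding `μ_ν = E_{X∼ν}[φ(X)]` (a Bochner integral). -/
def KME {𝒳 H : Type*} [MeasurableSpace 𝒳] [NormedAddCommGroup H] [InnerProductSpace ℝ H]
    (φ : 𝒳 → H) (ν : Measure 𝒳) : H :=
  ∫ x, φ x ∂ν

/-- The RKHS variance `𝒱*_ν = E_{X∼ν}[‖φ(X) − μ_ν‖²]`. -/
def Vstar {𝒳 H : Type*} [MeasurableSpace 𝒳] [NormedAddCommGroup H] [InnerProductSpace ℝ H]
    (φ : 𝒳 → H) (ν : Measure 𝒳) : ℝ :=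
  ∫ x, ‖φ x - KME φ ν‖ ^ 2 ∂ν

/-- The empirical kernel mean embedding `μ̂ = (1/n) Σ_{t<n} φ(x_t)`. -/
def empKME {𝒳 H : Type*} [NormedAddCommGroup H] [InnerProductSpace ℝ H]
    (φ : 𝒳 → H) (n : ℕ) (x : ℕ → 𝒳) : H :=
  (n : ℝ)⁻¹ • ∑ t ∈ range n, φ (x t)

/-- The empirical RKHS variance
`𝒱̂ = (1/(n−1)) Σ_{t<n} (g(x_t,x_t) − (1/n) Σ_{s<n} g(x_t,x_s))`. -/
def empVar {𝒳 H : Type*} [NormedAddCommGroup H] [InnerProductSpace ℝ H]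
    (φ : 𝒳 → H) (n : ℕ) (x : ℕ → 𝒳) : ℝ :=
  ((n : ℝ) - 1)⁻¹ * ∑ t ∈ range n,
    (kerG φ (x t) (x t) - (n : ℝ)⁻¹ * ∑ s ∈ range n, kerG φ (x t) (x s))

/-- The variance-aware threshold
`B^{i,j}(n,δ') = (√𝒱̂_i + √𝒱̂_j) √(2 log(8(N²−N)/δ')/n) + (32/3) √g̃ log(8(N²−N)/δ')/n`. -/
def clusterThreshold {𝒳 H : Type*} [NormedAddCommGroup H] [InnerProductSpace ℝ H]
    (φ : 𝒳 → H) (N n : ℕ) (δ' : ℝ) (Vi Vj : ℝ) : ℝ :=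
  (Real.sqrt Vi + Real.sqrt Vj)
      * Real.sqrt (2 * Real.log (8 * ((N : ℝ) ^ 2 - N) / δ') / n)
    + (32 / 3) * Real.sqrt (kerRange φ) * (Real.log (8 * ((N : ℝ) ^ 2 - N) / δ') / n)

/-- The random graph of the CLUSTER subroutine: an edge `{i,j}` (for `i ≠ j`) whenever
`‖μ̂_i − μ̂_j‖ ≤ B^{i,j}(n,δ')`. -/
def clusterGraph {𝒳 H : Type*} [NormedAddCommGroup H] [InnerProductSpace ℝ H]
    (φ : 𝒳 → H) (N n : ℕ) (δ' : ℝ) (x : Fin N → ℕ → 𝒳) : SimpleGraph (Fin N) :=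
  SimpleGraph.fromRel (fun i j =>
    ‖empKME φ n (x i) - empKME φ n (x j)‖
      ≤ clusterThreshold φ N n δ' (empVar φ n (x i)) (empVar φ n (x j)))

/-- The signal-to-noise ratio
`s*² = min_{i ≠ j, μ_i ≠ μ_j} min(‖μ_i − μ_j‖² / max(𝒱*_i, 𝒱*_j), 2‖μ_i − μ_j‖/√ḡ)`. -/
def snrSq {𝒳 H : Type*} [MeasurableSpace 𝒳] [NormedAddCommGroup H] [InnerProductSpace ℝ H]
    (φ : 𝒳 → H) (N : ℕ) (ν : Fin N → Measure 𝒳) : ℝ :=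
  sInf {x : ℝ | ∃ i j : Fin N, i ≠ j ∧ KME φ (ν i) ≠ KME φ (ν j) ∧
    x = min (‖KME φ (ν i) - KME φ (ν j)‖ ^ 2 / max (Vstar φ (ν i)) (Vstar φ (ν j)))
            (2 * ‖KME φ (ν i) - KME φ (ν j)‖ / Real.sqrt (kerSup φ))}

/-!
Two arms with the same mean embedding are adjacent as soon as each empirical embedding lies within
its own confidence radius, since the threshold is the sum of the two radii; so it suffices to show
that an arm leaves its radius with probability at most `3 exp (-L)` and to sum over the arms.

For a single arm, Pinelis' argument gives Bernstein's inequality in Hilbert space: convexity of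
`u ↦ cosh √u` bounds `cosh ‖S + Y‖` by a term linear in `Y`, which vanishes in expectation, plus a
multiple of `cosh ‖S‖`. This controls the empirical embedding in terms of the true variance. The
true variance is in turn bounded by the empirical one through the lower tail of
`∑ ‖φ (X t) - μ‖ ^ 2`, a sum of independent nonnegative variables, for which the second moment
alone gives a sub-Gaussian bound.
-/

lemma convexOn_cosh_sqrt : ConvexOn ℝ (Set.Ici 0) fun u : ℝ => Real.cosh √u := by
  have hasSum_cosh_sqrt {u : ℝ} (hu : 0 ≤ u) :
      HasSum (fun k : ℕ => u ^ k / ((2 * k).factorial : ℝ)) (Real.cosh √u) := by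
    simpa only [pow_mul, Real.sq_sqrt hu] using Real.hasSum_cosh √u
  refine ⟨convex_Ici 0, fun u hu v hv a b ha hb hab => ?_⟩
  refine hasSum_le (fun k => ?_) (hasSum_cosh_sqrt (convex_Ici 0 hu hv ha hb hab))
    (((hasSum_cosh_sqrt hu).mul_left a).add ((hasSum_cosh_sqrt hv).mul_left b))
  rw [mul_div_assoc', mul_div_assoc', ← add_div]
  gcongr
  exact (convexOn_pow k).2 hu hv ha hb hab

lemma exp_neg_le_one_sub_add_sq_div_two {x : ℝ} (hx : 0 ≤ x) :
    Real.exp (-x) ≤ 1 - x + x ^ 2 / 2 := by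
  have hpos : 0 < 1 - x + x ^ 2 / 2 := by nlinarith [sq_nonneg (x - 1)]
  rw [Real.exp_neg, inv_le_iff_one_le_mul₀ (Real.exp_pos x)]
  calc (1 : ℝ) ≤ (1 - x + x ^ 2 / 2) * (1 + x + x ^ 2 / 2) := by nlinarith [sq_nonneg (x ^ 2)]
    _ ≤ (1 - x + x ^ 2 / 2) * Real.exp x := by
      gcongr
      exact Real.quadratic_le_exp_of_nonneg hx

lemma exp_le_one_add_self_add_sq_div {x : ℝ} (hx0 : 0 ≤ x) (hx3 : x < 3) :
    Real.exp x ≤ 1 + x + x ^ 2 / (2 * (1 - x / 3)) := by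
  have hexp : HasSum (fun k : ℕ => x ^ (k + 2) / ((k + 2).factorial : ℝ))
      (Real.exp x - (1 + x)) := by
    have h := NormedSpace.expSeries_div_hasSum_exp x
    rw [← Real.exp_eq_exp_ℝ, ← hasSum_nat_add_iff' 2] at h
    simpa [sum_range_succ] using h
  have hgeom : HasSum (fun k : ℕ => x ^ 2 / 2 * (x / 3) ^ k) (x ^ 2 / 2 * (1 - x / 3)⁻¹) :=
    (hasSum_geometric_of_lt_one (by positivity) (by linarith)).mul_left _
  have hle := hasSum_le (fun k => ?_) hexp hgeom
  · rw [← div_eq_mul_inv, div_div] at hle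
    linarith
  have hfact : (2 * 3 ^ k : ℝ) ≤ (k + 2).factorial := by
    rw [add_comm k]
    exact_mod_cast Nat.factorial_mul_pow_le_factorial (m := 2) (n := k)
  calc x ^ (k + 2) / ((k + 2).factorial : ℝ) ≤ x ^ (k + 2) / (2 * 3 ^ k) := by gcongr
    _ = x ^ 2 / 2 * (x / 3) ^ k := by rw [div_pow]; ring

section Hilbert

variable {H : Type*} [NormedAddCommGroup H] [InnerProductSpace ℝ H]

/-- The gradient of `x ↦ cosh ‖x‖`. At `x = 0` the convention `0 / 0 = 0` gives the correct
value `0`. -/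
def gradCoshNorm (x : H) : H :=
  (Real.sinh ‖x‖ / ‖x‖) • x

lemma norm_gradCoshNorm (x : H) : ‖gradCoshNorm x‖ = Real.sinh ‖x‖ := by
  rcases eq_or_ne x 0 with rfl | hx
  · simp [gradCoshNorm]
  · have hsinh : 0 ≤ Real.sinh ‖x‖ := Real.sinh_nonneg_iff.2 (norm_nonneg x)
    rw [gradCoshNorm, norm_smul, norm_div, norm_norm, Real.norm_of_nonneg hsinh]
    field_simp

lemma measurable_gradCoshNorm [SecondCountableTopology H] [MeasurableSpace H] [BorelSpace H] :
    Measurable (gradCoshNorm (H := H)) := by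
  unfold gradCoshNorm
  fun_prop

lemma cosh_norm_add_le (x y : H) :
    Real.cosh ‖x + y‖ ≤ inner ℝ (gradCoshNorm x) y
      + Real.cosh ‖x‖ * (Real.exp ‖y‖ - ‖y‖) := by
  have hsinh_ge : ‖y‖ ≤ Real.sinh ‖y‖ := Real.self_le_sinh_iff.2 (norm_nonneg y)
  rw [← Real.cosh_add_sinh ‖y‖]
  rcases eq_or_ne x 0 with rfl | hx
  · simp only [zero_add, norm_zero, Real.cosh_zero, gradCoshNorm, smul_zero, inner_zero_left,
      one_mul]
    linarith
  rcases eq_or_ne y 0 with rfl | hy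
  · simp
  obtain ⟨c, hc, hc_ge, hc_le⟩ : ∃ c, inner ℝ x y = ‖x‖ * ‖y‖ * c ∧ -1 ≤ c ∧ c ≤ 1 := by
    refine ⟨inner ℝ x y / (‖x‖ * ‖y‖), ?_, abs_le.1 (abs_real_inner_div_norm_mul_norm_le_one x y)⟩
    field_simp
  have hnorm_sq : ‖x + y‖ ^ 2
      = (1 + c) / 2 * (‖x‖ + ‖y‖) ^ 2 + (1 - c) / 2 * (‖x‖ - ‖y‖) ^ 2 := by
    rw [norm_add_sq_real, hc]; ring
  have hconv : Real.cosh ‖x + y‖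
      ≤ (1 + c) / 2 * Real.cosh (‖x‖ + ‖y‖) + (1 - c) / 2 * Real.cosh (‖x‖ - ‖y‖) := by
    have h := convexOn_cosh_sqrt.2 (sq_nonneg (‖x‖ + ‖y‖)) (sq_nonneg (‖x‖ - ‖y‖))
      (by linarith : 0 ≤ (1 + c) / 2) (by linarith : 0 ≤ (1 - c) / 2) (by ring)
    simpa only [smul_eq_mul, ← hnorm_sq, Real.sqrt_sq_eq_abs, Real.cosh_abs] using h
  have hinner : inner ℝ (gradCoshNorm x) y = Real.sinh ‖x‖ * ‖y‖ * c := by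
    rw [gradCoshNorm, real_inner_smul_left, hc]; field_simp
  have hsinh_mul : c * Real.sinh ‖x‖ ≤ Real.cosh ‖x‖ := by
    nlinarith [Real.sinh_lt_cosh ‖x‖, Real.sinh_nonneg_iff.2 (norm_nonneg x)]
  calc Real.cosh ‖x + y‖
      ≤ Real.cosh ‖x‖ * Real.cosh ‖y‖ + c * Real.sinh ‖x‖ * Real.sinh ‖y‖ := by
        rw [Real.cosh_add, Real.cosh_sub] at hconv
        linarith
    _ = inner ℝ (gradCoshNorm x) y + Real.cosh ‖x‖ * Real.cosh ‖y‖
          + c * Real.sinh ‖x‖ * (Real.sinh ‖y‖ - ‖y‖) := by rw [hinner]; ring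
    _ ≤ inner ℝ (gradCoshNorm x) y + Real.cosh ‖x‖ * Real.cosh ‖y‖
          + Real.cosh ‖x‖ * (Real.sinh ‖y‖ - ‖y‖) := by gcongr
    _ = _ := by ring

lemma cosh_norm_add_le_of_norm_le {K : ℝ} (hK : K < 3) (x : H) {y : H} (hy : ‖y‖ ≤ K) :
    Real.cosh ‖x + y‖ ≤ inner ℝ (gradCoshNorm x) y
      + Real.cosh ‖x‖ * (1 + ‖y‖ ^ 2 / (2 * (1 - K / 3))) := by
  refine (cosh_norm_add_le x y).trans ?_
  have hexp := exp_le_one_add_self_add_sq_div (norm_nonneg y) (hy.trans_lt hK)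
  have hmono : ‖y‖ ^ 2 / (2 * (1 - ‖y‖ / 3)) ≤ ‖y‖ ^ 2 / (2 * (1 - K / 3)) := by
    gcongr
    linarith
  gcongr
  linarith

end Hilbert

lemma deviation_le_of_variance_lower_bound {D q a M v : ℝ} (hD0 : 0 ≤ D) (hq : 0 ≤ q)
    (hM : 0 ≤ M) (hv : 0 ≤ v) (haM : a ≤ M) (hD : D ≤ q * a + M * q ^ 2 / 6)
    (hav : a ^ 2 - M * q * a ≤ v ^ 2 + D ^ 2) :
    D ≤ v * q + 15 / 8 * M * q ^ 2 := by
  have hqM : 0 ≤ q * M := mul_nonneg hq hM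
  have hvq : 0 ≤ v * q := mul_nonneg hv hq
  have hDM : D ≤ q * M + M * q ^ 2 / 6 := by nlinarith
  rcases le_total (3 / 5) q with hq_ge | hq_le
  · nlinarith
  · have hD_le : D ≤ 11 / 10 * (q * M) := by nlinarith
    have hsq : (a - q * M / 2) ^ 2 ≤ (v + 29 / 24 * (q * M)) ^ 2 := by
      nlinarith [mul_nonneg hv hqM, sq_nonneg (q * M)]
    have ha_le : a ≤ v + 41 / 24 * (q * M) := by
      linarith [le_of_sq_le_sq hsq (by positivity)]
    nlinarith

lemma sq_two_mul_div_mul_le {L x v : ℝ} (hL : 0 ≤ L) (hx : 0 < x) (hvx : 2 * v * L ≤ x ^ 2) :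
    (2 * L / x) ^ 2 * v ≤ 2 * L := by
  calc (2 * L / x) ^ 2 * v = 2 * L * (2 * v * L / x ^ 2) := by ring
    _ ≤ 2 * L * 1 := by
        gcongr
        exact div_le_one_of_le₀ hvx (by positivity)
    _ = 2 * L := mul_one _

lemma measureReal_lt_le_of_forall_measureReal_le {Ω : Type*} [MeasurableSpace Ω]
    {P : Measure Ω} [IsFiniteMeasure P] {f : Ω → ℝ} {r b : ℝ}
    (h : ∀ x > r, P.real {ω | x ≤ f ω} ≤ b) : P.real {ω | r < f ω} ≤ b := by
  obtain ⟨u, hu_anti, hu_gt, hu_lim⟩ := exists_seq_strictAnti_tendsto r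
  have hUnion : {ω | r < f ω} = ⋃ k, {ω | u k ≤ f ω} := by
    change f ⁻¹' Set.Ioi r = ⋃ k, f ⁻¹' Set.Ici (u k)
    rw [← Set.preimage_iUnion, iUnion_Ici_eq_Ioi_of_lt_of_tendsto hu_gt hu_lim]
  have hmono : Monotone fun k => {ω | u k ≤ f ω} :=
    fun j k hjk ω (hω : u j ≤ f ω) => (hu_anti.antitone hjk).trans hω
  have hlim := (ENNReal.tendsto_toReal (measure_ne_top P _)).comp
    (tendsto_measure_iUnion_atTop (μ := P) hmono)
  rw [hUnion]
  exact le_of_tendsto' hlim fun k => h _ (hu_gt k)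

section BoundedVectors

variable {E Ω ι : Type*} [NormedAddCommGroup E] [MeasurableSpace Ω] {P : Measure Ω}

lemma integrable_cosh_norm [IsFiniteMeasure P] {S : Ω → E} {C : ℝ}
    (hS : AEStronglyMeasurable S P) (hSb : ∀ᵐ ω ∂P, ‖S ω‖ ≤ C) :
    Integrable (fun ω => Real.cosh ‖S ω‖) P := by
  refine .of_bound (Real.continuous_cosh.comp_aestronglyMeasurable hS.norm) (Real.cosh C) ?_
  filter_upwards [hSb] with ω hω
  rw [Real.norm_of_nonneg (Real.cosh_pos _).le, Real.cosh_le_cosh, abs_norm]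
  exact hω.trans (le_abs_self C)

lemma ae_norm_sum_le {ξ : ι → Ω → E} {M : ℝ} (s : Finset ι) (hb : ∀ i, ∀ᵐ ω ∂P, ‖ξ i ω‖ ≤ M) :
    ∀ᵐ ω ∂P, ‖∑ i ∈ s, ξ i ω‖ ≤ #s * M := by
  filter_upwards [(Filter.eventually_all_finset s).2 fun i _ => hb i] with ω hω
  simpa using norm_sum_le_of_le s hω

end BoundedVectors

section IndepInner

variable {H Ω : Type*} [NormedAddCommGroup H] [InnerProductSpace ℝ H] [MeasurableSpace H]
  [BorelSpace H] [MeasurableSpace Ω] {P : Measure Ω} {X Y : Ω → H}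

lemma integrable_inner_of_indepFun (hXY : IndepFun X Y P) (hX : Integrable X P)
    (hY : Integrable Y P) : Integrable (fun ω => inner ℝ (X ω) (Y ω)) P :=
  hXY.integrable_bilin hX hY (innerSL ℝ)

lemma integral_inner_of_indepFun [CompleteSpace H] (hXY : IndepFun X Y P) (hX : Integrable X P)
    (hY : Integrable Y P) :
    ∫ ω, inner ℝ (X ω) (Y ω) ∂P = inner ℝ (∫ ω, X ω ∂P) (∫ ω, Y ω ∂P) :=
  hXY.integral_bilin hX hY (innerSL ℝ)

end IndepInner

section HilbertBernstein

variable {H Ω ι : Type*} [NormedAddCommGroup H] [InnerProductSpace ℝ H]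
  [SecondCountableTopology H] [MeasurableSpace H] [BorelSpace H]
  [MeasurableSpace Ω] {P : Measure Ω}

lemma integrable_gradCoshNorm [IsFiniteMeasure P] {S : Ω → H} {C : ℝ} (hS : AEMeasurable S P)
    (hSb : ∀ᵐ ω ∂P, ‖S ω‖ ≤ C) : Integrable (fun ω => gradCoshNorm (S ω)) P := by
  refine .of_bound (measurable_gradCoshNorm.comp_aemeasurable hS).aestronglyMeasurable
    (Real.sinh C) ?_
  filter_upwards [hSb] with ω hω
  rwa [norm_gradCoshNorm, Real.sinh_le_sinh]

variable [CompleteSpace H] [IsProbabilityMeasure P]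

lemma integral_cosh_norm_add_le {S Y : Ω → H} {C K : ℝ} (hK : K < 3) (hSY : IndepFun S Y P)
    (hS : AEMeasurable S P) (hSb : ∀ᵐ ω ∂P, ‖S ω‖ ≤ C)
    (hY : AEMeasurable Y P) (hYb : ∀ᵐ ω ∂P, ‖Y ω‖ ≤ K) (hY0 : ∫ ω, Y ω ∂P = 0) :
    ∫ ω, Real.cosh ‖S ω + Y ω‖ ∂P
      ≤ (∫ ω, Real.cosh ‖S ω‖ ∂P) * Real.exp ((∫ ω, ‖Y ω‖ ^ 2 ∂P) / (2 * (1 - K / 3))) := by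
  set c := 2 * (1 - K / 3)
  have hindep_grad : IndepFun (fun ω => gradCoshNorm (S ω)) Y P :=
    hSY.comp measurable_gradCoshNorm measurable_id
  have hindep_cosh : IndepFun (fun ω => Real.cosh ‖S ω‖) (fun ω => 1 + ‖Y ω‖ ^ 2 / c) P :=
    hSY.comp (φ := fun x => Real.cosh ‖x‖) (ψ := fun y => 1 + ‖y‖ ^ 2 / c)
      (by fun_prop) (by fun_prop)
  have hint_grad := integrable_gradCoshNorm hS hSb
  have hint_cosh := integrable_cosh_norm hS.aestronglyMeasurable hSb
  have hint_sq : Integrable (fun ω => ‖Y ω‖ ^ 2 / c) P :=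
    ((MemLp.of_bound hY.aestronglyMeasurable K hYb).integrable_norm_pow two_ne_zero).div_const c
  have hint_Y : Integrable Y P := .of_bound hY.aestronglyMeasurable K hYb
  have hint_add : Integrable (fun ω => Real.cosh ‖S ω + Y ω‖) P := by
    refine integrable_cosh_norm (C := C + K) (hS.add hY).aestronglyMeasurable ?_
    filter_upwards [hSb, hYb] with ω hSω hYω using norm_add_le_of_le hSω hYω
  have hint_inner := integrable_inner_of_indepFun hindep_grad hint_grad hint_Y
  have hint_prod : Integrable (fun ω => Real.cosh ‖S ω‖ * (1 + ‖Y ω‖ ^ 2 / c)) P :=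
    hindep_cosh.integrable_mul hint_cosh ((integrable_const 1).add hint_sq)
  have hinner : ∫ ω, inner ℝ (gradCoshNorm (S ω)) (Y ω) ∂P = 0 := by
    rw [integral_inner_of_indepFun hindep_grad hint_grad hint_Y, hY0, inner_zero_right]
  calc ∫ ω, Real.cosh ‖S ω + Y ω‖ ∂P
      ≤ ∫ ω, (inner ℝ (gradCoshNorm (S ω)) (Y ω)
          + Real.cosh ‖S ω‖ * (1 + ‖Y ω‖ ^ 2 / c)) ∂P := by
        refine integral_mono_ae hint_add (hint_inner.add hint_prod) ?_
        filter_upwards [hYb] with ω hω using cosh_norm_add_le_of_norm_le hK (S ω) hω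
    _ = ∫ ω, Real.cosh ‖S ω‖ * (1 + ‖Y ω‖ ^ 2 / c) ∂P := by
        rw [integral_add hint_inner hint_prod, hinner, zero_add]
    _ = (∫ ω, Real.cosh ‖S ω‖ ∂P) * ((∫ ω, ‖Y ω‖ ^ 2 ∂P) / c + 1) := by
        rw [hindep_cosh.integral_fun_mul_eq_mul_integral hint_cosh.1 (by fun_prop),
          integral_add (integrable_const 1) hint_sq, integral_div, integral_const,
          probReal_univ, one_smul, add_comm 1]
    _ ≤ _ := by
        gcongr
        exact Real.add_one_le_exp _

lemma integral_cosh_norm_sum_le {ξ : ι → Ω → H} {K : ℝ} (hK : K < 3)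
    (hm : ∀ i, AEMeasurable (ξ i) P) (hb : ∀ i, ∀ᵐ ω ∂P, ‖ξ i ω‖ ≤ K) (hind : iIndepFun ξ P)
    (h0 : ∀ i, ∫ ω, ξ i ω ∂P = 0) (s : Finset ι) :
    ∫ ω, Real.cosh ‖∑ i ∈ s, ξ i ω‖ ∂P
      ≤ Real.exp ((∑ i ∈ s, ∫ ω, ‖ξ i ω‖ ^ 2 ∂P) / (2 * (1 - K / 3))) := by
  classical
  induction s using Finset.induction_on with
  | empty => simp
  | insert j s hj ih =>
    have hindep : IndepFun (fun ω => ∑ i ∈ s, ξ i ω) (ξ j) P := by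
      simpa only [← Finset.sum_fn] using hind.indepFun_finsetSum_of_notMem₀ hm hj
    calc ∫ ω, Real.cosh ‖∑ i ∈ insert j s, ξ i ω‖ ∂P
        = ∫ ω, Real.cosh ‖∑ i ∈ s, ξ i ω + ξ j ω‖ ∂P := by
          simp_rw [sum_insert hj, add_comm (ξ j _)]
      _ ≤ (∫ ω, Real.cosh ‖∑ i ∈ s, ξ i ω‖ ∂P)
            * Real.exp ((∫ ω, ‖ξ j ω‖ ^ 2 ∂P) / (2 * (1 - K / 3))) :=
          integral_cosh_norm_add_le hK hindep (by fun_prop) (ae_norm_sum_le s hb) (hm j) (hb j)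
            (h0 j)
      _ ≤ Real.exp ((∑ i ∈ s, ∫ ω, ‖ξ i ω‖ ^ 2 ∂P) / (2 * (1 - K / 3)))
            * Real.exp ((∫ ω, ‖ξ j ω‖ ^ 2 ∂P) / (2 * (1 - K / 3))) := by gcongr
      _ = Real.exp ((∑ i ∈ insert j s, ∫ ω, ‖ξ i ω‖ ^ 2 ∂P) / (2 * (1 - K / 3))) := by
          rw [← Real.exp_add, sum_insert hj]
          ring_nf

lemma measureReal_le_norm_sum_le_exp {ξ : ι → Ω → H} {M l : ℝ} (hl : 0 ≤ l) (hlM : l * M < 3)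
    (hm : ∀ i, AEMeasurable (ξ i) P) (hb : ∀ i, ∀ᵐ ω ∂P, ‖ξ i ω‖ ≤ M) (hind : iIndepFun ξ P)
    (h0 : ∀ i, ∫ ω, ξ i ω ∂P = 0) (s : Finset ι) (r : ℝ) :
    P.real {ω | r ≤ ‖∑ i ∈ s, ξ i ω‖}
      ≤ 2 * Real.exp
        (l ^ 2 * (∑ i ∈ s, ∫ ω, ‖ξ i ω‖ ^ 2 ∂P) / (2 * (1 - l * M / 3)) - l * r) := by
  set v := ∑ i ∈ s, ∫ ω, ‖ξ i ω‖ ^ 2 ∂P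
  have hb_smul (i : ι) : ∀ᵐ ω ∂P, ‖l • ξ i ω‖ ≤ l * M := by
    filter_upwards [hb i] with ω hω
    rw [norm_smul, Real.norm_of_nonneg hl]
    gcongr
  have hcosh : ∫ ω, Real.cosh ‖∑ i ∈ s, l • ξ i ω‖ ∂P
      ≤ Real.exp (l ^ 2 * v / (2 * (1 - l * M / 3))) := by
    have h := integral_cosh_norm_sum_le (ξ := fun i ω => l • ξ i ω) hlM
      (fun i => (hm i).const_smul l) hb_smul
      (hind.comp (fun _ x => l • x) fun _ => by fun_prop)
      (fun i => by rw [integral_smul, h0 i, smul_zero]) s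
    simpa only [norm_smul _ (ξ _ _), mul_pow, Real.norm_eq_abs, sq_abs, integral_const_mul,
      ← mul_sum] using h
  have hintegrable : Integrable (fun ω => Real.cosh ‖∑ i ∈ s, l • ξ i ω‖) P :=
    integrable_cosh_norm (by fun_prop) (ae_norm_sum_le s hb_smul)
  have hsub : {ω | r ≤ ‖∑ i ∈ s, ξ i ω‖}
      ⊆ {ω | Real.exp (l * r) / 2 ≤ Real.cosh ‖∑ i ∈ s, l • ξ i ω‖} := by
    intro ω (hω : r ≤ ‖∑ i ∈ s, ξ i ω‖)
    change Real.exp (l * r) / 2 ≤ Real.cosh ‖∑ i ∈ s, l • ξ i ω‖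
    rw [← smul_sum, norm_smul, Real.norm_of_nonneg hl, Real.cosh_eq]
    gcongr
    exact le_add_of_le_of_nonneg (by gcongr) (Real.exp_pos _).le
  have hmarkov := mul_meas_ge_le_integral_of_nonneg
    (Filter.Eventually.of_forall fun ω => (Real.cosh_pos _).le) hintegrable (Real.exp (l * r) / 2)
  calc P.real {ω | r ≤ ‖∑ i ∈ s, ξ i ω‖}
      ≤ P.real {ω | Real.exp (l * r) / 2 ≤ Real.cosh ‖∑ i ∈ s, l • ξ i ω‖} :=
        measureReal_mono hsub
    _ ≤ Real.exp (l ^ 2 * v / (2 * (1 - l * M / 3))) / (Real.exp (l * r) / 2) := by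
        rw [le_div_iff₀' (by positivity)]
        exact hmarkov.trans hcosh
    _ = _ := by rw [Real.exp_sub]; ring

lemma measureReal_add_le_norm_sum_le {ξ : ι → Ω → H} {M L x : ℝ} (hM : 0 ≤ M) (hL : 0 ≤ L)
    (hm : ∀ i, AEMeasurable (ξ i) P) (hb : ∀ i, ∀ᵐ ω ∂P, ‖ξ i ω‖ ≤ M) (hind : iIndepFun ξ P)
    (h0 : ∀ i, ∫ ω, ξ i ω ∂P = 0) (s : Finset ι) (hx : 0 < x)
    (hvx : 2 * (∑ i ∈ s, ∫ ω, ‖ξ i ω‖ ^ 2 ∂P) * L ≤ x ^ 2) :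
    P.real {ω | x + M / 3 * L ≤ ‖∑ i ∈ s, ξ i ω‖} ≤ 2 * Real.exp (-L) := by
  set v := ∑ i ∈ s, ∫ ω, ‖ξ i ω‖ ^ 2 ∂P
  -- `l = w / (1 + w * M / 3)` turns the factor `1 - l * M / 3` into `1 / (1 + w * M / 3)`.
  set w := 2 * L / x
  have hw : 0 ≤ w := by positivity
  have hwx : w * x = 2 * L := div_mul_cancel₀ _ hx.ne'
  have hwv : w ^ 2 * v ≤ 2 * L := sq_two_mul_div_mul_le hL hx hvx
  have hden : 0 < 1 + w * M / 3 := by positivity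
  have hone_sub : 1 - w / (1 + w * M / 3) * M / 3 = 1 / (1 + w * M / 3) := by
    field_simp
    ring
  refine (measureReal_le_norm_sum_le_exp (l := w / (1 + w * M / 3)) (by positivity) ?_ hm hb hind
    h0 s _).trans ?_
  · have : 0 < 1 - w / (1 + w * M / 3) * M / 3 := hone_sub ▸ by positivity
    linarith
  gcongr
  rw [hone_sub]
  calc (w / (1 + w * M / 3)) ^ 2 * v / (2 * (1 / (1 + w * M / 3)))
        - w / (1 + w * M / 3) * (x + M / 3 * L)
      = (w ^ 2 * v / 2 - w * x - w * M / 3 * L) / (1 + w * M / 3) := by field_simp; ring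
    _ ≤ -L * (1 + w * M / 3) / (1 + w * M / 3) := by
        gcongr
        linarith
    _ = -L := mul_div_cancel_right₀ _ hden.ne'

theorem measureReal_sqrt_add_lt_norm_sum_le {ξ : ι → Ω → H} {M L : ℝ} (hM : 0 ≤ M) (hL : 0 ≤ L)
    (hm : ∀ i, AEMeasurable (ξ i) P) (hb : ∀ i, ∀ᵐ ω ∂P, ‖ξ i ω‖ ≤ M) (hind : iIndepFun ξ P)
    (h0 : ∀ i, ∫ ω, ξ i ω ∂P = 0) (s : Finset ι) :
    P.real {ω | √(2 * (∑ i ∈ s, ∫ ω, ‖ξ i ω‖ ^ 2 ∂P) * L) + M / 3 * L < ‖∑ i ∈ s, ξ i ω‖}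
      ≤ 2 * Real.exp (-L) := by
  refine measureReal_lt_le_of_forall_measureReal_le fun r hr => ?_
  have hx := lt_sub_iff_add_lt.2 hr
  simpa using measureReal_add_le_norm_sum_le hM hL hm hb hind h0 s
    ((Real.sqrt_nonneg _).trans_lt hx) (Real.lt_sq_of_sqrt_lt hx).le

end HilbertBernstein

section LowerTail

variable {Ω ι : Type*} [MeasurableSpace Ω] {P : Measure Ω}

lemma integrable_exp_neg_mul_of_nonneg [IsFiniteMeasure P] {Z : Ω → ℝ} {l : ℝ} (hl : 0 ≤ l)
    (hZ : AEMeasurable Z P) (hZ0 : 0 ≤ᵐ[P] Z) : Integrable (fun ω => Real.exp (-l * Z ω)) P := by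
  refine .of_bound (by fun_prop) 1 ?_
  filter_upwards [hZ0] with ω hω
  rw [Real.norm_eq_abs, Real.abs_exp, Real.exp_le_one_iff, neg_mul]
  exact neg_nonpos.2 (mul_nonneg hl hω)

variable [IsProbabilityMeasure P]

lemma mgf_neg_le_exp_of_nonneg {Z : Ω → ℝ} {l : ℝ} (hl : 0 ≤ l) (hZ : MemLp Z 2 P)
    (hZ0 : 0 ≤ᵐ[P] Z) :
    mgf Z P (-l) ≤ Real.exp (-l * ∫ ω, Z ω ∂P + l ^ 2 * (∫ ω, Z ω ^ 2 ∂P) / 2) := by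
  have hintegrable := hZ.integrable one_le_two
  have hint_sq := hZ.integrable_sq
  calc mgf Z P (-l) ≤ ∫ ω, (1 - l * Z ω + l ^ 2 / 2 * Z ω ^ 2) ∂P := by
        refine integral_mono_ae (integrable_exp_neg_mul_of_nonneg hl hZ.aemeasurable hZ0)
          (((integrable_const 1).sub (hintegrable.const_mul l)).add (hint_sq.const_mul _)) ?_
        filter_upwards [hZ0] with ω hω
        have h := exp_neg_le_one_sub_add_sq_div_two (mul_nonneg hl hω)
        rw [← neg_mul] at h
        linarith
    _ = -l * ∫ ω, Z ω ∂P + l ^ 2 * (∫ ω, Z ω ^ 2 ∂P) / 2 + 1 := by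
        rw [integral_add (by fun_prop) (by fun_prop), integral_sub (by fun_prop) (by fun_prop),
          integral_const_mul, integral_const_mul, integral_const, probReal_univ, one_smul]
        ring
    _ ≤ _ := Real.add_one_le_exp _

lemma measureReal_le_sum_integral_sub_le {Z : ι → Ω → ℝ} {L x : ℝ} (hL : 0 ≤ L)
    (hZ : ∀ i, MemLp (Z i) 2 P) (hZ0 : ∀ i, 0 ≤ᵐ[P] Z i) (hind : iIndepFun Z P) (s : Finset ι)
    (hx : 0 < x) (hvx : 2 * (∑ i ∈ s, ∫ ω, Z i ω ^ 2 ∂P) * L ≤ x ^ 2) :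
    P.real {ω | x ≤ ∑ i ∈ s, ∫ ω', Z i ω' ∂P - ∑ i ∈ s, Z i ω} ≤ Real.exp (-L) := by
  set e := ∑ i ∈ s, ∫ ω', Z i ω' ∂P
  set v := ∑ i ∈ s, ∫ ω, Z i ω ^ 2 ∂P
  set l := 2 * L / x
  have hl : 0 ≤ l := by positivity
  have hlx : l * x = 2 * L := div_mul_cancel₀ _ hx.ne'
  have hlv : l ^ 2 * v ≤ 2 * L := sq_two_mul_div_mul_le hL hx hvx
  have hmgf : mgf (∑ i ∈ s, Z i) P (-l) ≤ Real.exp (-l * e + l ^ 2 * v / 2) := by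
    rw [hind.mgf_sum₀ fun i => (hZ i).aemeasurable]
    calc ∏ i ∈ s, mgf (Z i) P (-l)
        ≤ ∏ i ∈ s, Real.exp (-l * ∫ ω, Z i ω ∂P + l ^ 2 * (∫ ω, Z i ω ^ 2 ∂P) / 2) :=
          prod_le_prod (fun _ _ => mgf_nonneg) fun i _ =>
            mgf_neg_le_exp_of_nonneg hl (hZ i) (hZ0 i)
      _ = Real.exp (-l * e + l ^ 2 * v / 2) := by
          rw [← Real.exp_sum, sum_add_distrib, ← mul_sum, ← sum_div, ← mul_sum]
  have hintegrable : Integrable (fun ω => Real.exp (-l * (∑ i ∈ s, Z i) ω)) P := by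
    refine integrable_exp_neg_mul_of_nonneg hl
      (Finset.aemeasurable_sum s fun i _ => (hZ i).aemeasurable) ?_
    filter_upwards [(Filter.eventually_all_finset s).2 fun i _ => hZ0 i] with ω hω
    rw [Finset.sum_apply]
    exact sum_nonneg hω
  have hset : {ω | x ≤ e - ∑ i ∈ s, Z i ω} = {ω | (∑ i ∈ s, Z i) ω ≤ e - x} := by
    ext ω
    rw [Set.mem_ofPred_eq, Set.mem_ofPred_eq, Finset.sum_apply, le_sub_comm]
  calc P.real {ω | x ≤ e - ∑ i ∈ s, Z i ω}
      ≤ Real.exp (- -l * (e - x)) * mgf (∑ i ∈ s, Z i) P (-l) :=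
        hset ▸ measure_le_le_exp_mul_mgf _ (neg_nonpos.2 hl) hintegrable
    _ ≤ Real.exp (- -l * (e - x)) * Real.exp (-l * e + l ^ 2 * v / 2) := by gcongr
    _ ≤ Real.exp (-L) := by
        rw [← Real.exp_add]
        gcongr
        linarith

theorem measureReal_sqrt_lt_sum_integral_sub_le {Z : ι → Ω → ℝ} {L : ℝ} (hL : 0 ≤ L)
    (hZ : ∀ i, MemLp (Z i) 2 P) (hZ0 : ∀ i, 0 ≤ᵐ[P] Z i) (hind : iIndepFun Z P) (s : Finset ι) :
    P.real {ω | √(2 * (∑ i ∈ s, ∫ ω, Z i ω ^ 2 ∂P) * L)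
        < ∑ i ∈ s, ∫ ω', Z i ω' ∂P - ∑ i ∈ s, Z i ω} ≤ Real.exp (-L) :=
  measureReal_lt_le_of_forall_measureReal_le fun _ hx =>
    measureReal_le_sum_integral_sub_le hL hZ hZ0 hind s ((Real.sqrt_nonneg _).trans_lt hx)
      (Real.lt_sq_of_sqrt_lt hx).le

end LowerTail

section SampleIdentities

variable {𝒳 H : Type*} [NormedAddCommGroup H] [InnerProductSpace ℝ H]

lemma sum_eq_smul_empKME (φ : 𝒳 → H) (n : ℕ) (x : ℕ → 𝒳) :
    ∑ t ∈ range n, φ (x t) = (n : ℝ) • empKME φ n x := by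
  rcases eq_or_ne n 0 with rfl | hn
  · simp
  · rw [empKME, smul_inv_smul₀ (Nat.cast_ne_zero.2 hn)]

lemma norm_sum_sub_eq (φ : 𝒳 → H) (n : ℕ) (x : ℕ → 𝒳) (m : H) :
    ‖∑ t ∈ range n, (φ (x t) - m)‖ = n * ‖empKME φ n x - m‖ := by
  rw [sum_sub_distrib, sum_eq_smul_empKME, sum_const, card_range, ← Nat.cast_smul_eq_nsmul ℝ,
    ← smul_sub, norm_smul, Real.norm_natCast]

lemma sub_one_mul_empVar (φ : 𝒳 → H) {n : ℕ} (hn : 2 ≤ n) (x : ℕ → 𝒳) :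
    ((n : ℝ) - 1) * empVar φ n x
      = ∑ t ∈ range n, ‖φ (x t)‖ ^ 2 - n * ‖empKME φ n x‖ ^ 2 := by
  have hn' : (2 : ℝ) ≤ n := by exact_mod_cast hn
  have hdouble : ∑ t ∈ range n, ∑ s ∈ range n, inner ℝ (φ (x t)) (φ (x s))
      = (n : ℝ) ^ 2 * ‖empKME φ n x‖ ^ 2 := by
    simp_rw [← inner_sum, ← sum_inner]
    rw [sum_eq_smul_empKME, real_inner_self_eq_norm_sq, norm_smul, Real.norm_natCast, mul_pow]
  unfold empVar kerG
  rw [mul_inv_cancel_left₀ (by linarith), sum_sub_distrib, ← mul_sum, hdouble]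
  simp_rw [real_inner_self_eq_norm_sq]
  field_simp

lemma sum_norm_sub_sq_eq (φ : 𝒳 → H) {n : ℕ} (hn : 2 ≤ n) (x : ℕ → 𝒳) (m : H) :
    ∑ t ∈ range n, ‖φ (x t) - m‖ ^ 2
      = ((n : ℝ) - 1) * empVar φ n x + n * ‖empKME φ n x - m‖ ^ 2 := by
  rw [sub_one_mul_empVar φ hn]
  simp_rw [norm_sub_sq_real]
  rw [sum_add_distrib, sum_sub_distrib, ← mul_sum, ← sum_inner, sum_eq_smul_empKME,
    real_inner_smul_left, sum_const, card_range, nsmul_eq_mul]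
  ring

lemma empVar_nonneg (φ : 𝒳 → H) {n : ℕ} (hn : 2 ≤ n) (x : ℕ → 𝒳) : 0 ≤ empVar φ n x := by
  have hn' : (2 : ℝ) ≤ n := by exact_mod_cast hn
  have h := sum_norm_sub_sq_eq φ hn x (empKME φ n x)
  rw [sub_self, norm_zero, zero_pow two_ne_zero, mul_zero, add_zero] at h
  refine nonneg_of_mul_nonneg_right (a := (n : ℝ) - 1) ?_ (by linarith)
  rw [← h]
  positivity

lemma norm_empKME_sub_le (φ : 𝒳 → H) {n : ℕ} (hn : 2 ≤ n) (x : ℕ → 𝒳) (m : H) {M V L : ℝ}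
    (hM : 0 ≤ M) (hV : 0 ≤ V) (hVM : V ≤ M ^ 2) (hL : 0 ≤ L)
    (hmean : ‖∑ t ∈ range n, (φ (x t) - m)‖ ≤ √(2 * (n * V) * L) + M / 3 * L)
    (hvar : n * V - √(2 * (n * (M ^ 2 * V)) * L) ≤ ∑ t ∈ range n, ‖φ (x t) - m‖ ^ 2) :
    ‖empKME φ n x - m‖ ≤ √(empVar φ n x) * √(2 * L / n) + 15 / 4 * M * (L / n) := by
  have hn' : (0 : ℝ) < n := by exact_mod_cast two_pos.trans_le hn
  have hsqrt (u : ℝ) : √(2 * (n * u) * L) = n * (√(2 * L / n) * √u) := by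
    rw [← Real.sqrt_mul (by positivity), ← Real.sqrt_sq hn'.le, ← Real.sqrt_mul (by positivity),
      Real.sqrt_sq hn'.le]
    field_simp
  set q := √(2 * L / n)
  have hq : q ^ 2 = 2 * L / n := Real.sq_sqrt (by positivity)
  have hqL : L = n * q ^ 2 / 2 := by rw [hq]; field_simp
  have hmean' : ‖empKME φ n x - m‖ ≤ q * √V + M * q ^ 2 / 6 := by
    rw [norm_sum_sub_eq, hsqrt V, hqL] at hmean
    exact le_of_mul_le_mul_left (hmean.trans_eq (by ring)) hn'
  have hvar' : √V ^ 2 - M * q * √V ≤ √(empVar φ n x) ^ 2 + ‖empKME φ n x - m‖ ^ 2 := by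
    rw [sum_norm_sub_sq_eq φ hn, hsqrt, Real.sqrt_mul (sq_nonneg M),
      Real.sqrt_sq hM] at hvar
    rw [Real.sq_sqrt hV, Real.sq_sqrt (empVar_nonneg φ hn x)]
    refine le_of_mul_le_mul_left ?_ hn'
    linarith [empVar_nonneg φ hn x]
  calc ‖empKME φ n x - m‖ ≤ √(empVar φ n x) * q + 15 / 8 * M * q ^ 2 :=
        deviation_le_of_variance_lower_bound (norm_nonneg _) (Real.sqrt_nonneg _) hM
          (Real.sqrt_nonneg _) (Real.sqrt_le_iff.2 ⟨hM, hVM⟩) hmean' hvar'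
    _ = _ := by rw [hq]; ring

end SampleIdentities

section KernelRange

variable {𝒳 H : Type*} [NormedAddCommGroup H] [InnerProductSpace ℝ H] {φ : 𝒳 → H}

lemma norm_sub_le_sqrt_kerRange (hφ : ∃ C, ∀ x, ‖φ x‖ ≤ C) (x y : 𝒳) :
    ‖φ x - φ y‖ ≤ √(2 * kerRange φ) := by
  obtain ⟨C, hC⟩ := hφ
  have hker (p : 𝒳 × 𝒳) : |kerG φ p.1 p.2| ≤ C ^ 2 := by
    rw [sq]
    exact (abs_real_inner_le_norm _ _).trans
      (mul_le_mul (hC _) (hC _) (norm_nonneg _) ((norm_nonneg _).trans (hC p.1)))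
  have habove : BddAbove (Set.range fun p : 𝒳 × 𝒳 => kerG φ p.1 p.2) :=
    ⟨C ^ 2, Set.forall_mem_range.2 fun p => (abs_le.1 (hker p)).2⟩
  have hbelow : BddBelow (Set.range fun p : 𝒳 × 𝒳 => kerG φ p.1 p.2) :=
    ⟨-C ^ 2, Set.forall_mem_range.2 fun p => (abs_le.1 (hker p)).1⟩
  refine Real.le_sqrt_of_sq_le ?_
  calc ‖φ x - φ y‖ ^ 2 = kerG φ x x + kerG φ y y - 2 * kerG φ x y := by
        rw [norm_sub_sq_real, kerG, kerG, kerG, real_inner_self_eq_norm_sq,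
          real_inner_self_eq_norm_sq]
        ring
    _ ≤ 2 * kerRange φ := by
        rw [kerRange]
        linarith [le_ciSup habove (x, x), le_ciSup habove (y, y), ciInf_le hbelow (x, y)]

lemma integral_sub_KME [MeasurableSpace 𝒳] [CompleteSpace H] {ν : Measure 𝒳}
    [IsProbabilityMeasure ν] (hφ : Integrable φ ν) : ∫ x, (φ x - KME φ ν) ∂ν = 0 := by
  rw [integral_sub hφ (integrable_const _), integral_const, probReal_univ, one_smul, KME, sub_self]

lemma norm_sub_KME_le [MeasurableSpace 𝒳] [CompleteSpace H] {ν : Measure 𝒳}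
    [IsProbabilityMeasure ν] (hφ : Integrable φ ν) {M : ℝ} {x : 𝒳} (hM : ∀ y, ‖φ x - φ y‖ ≤ M) :
    ‖φ x - KME φ ν‖ ≤ M := by
  have hmean : φ x - KME φ ν = ∫ y, (φ x - φ y) ∂ν := by
    rw [integral_sub (integrable_const _) hφ, integral_const, probReal_univ, one_smul, KME]
  simpa [hmean] using norm_integral_le_of_norm_le_const (μ := ν) (.of_forall hM)

end KernelRange

section EmpiricalBernstein

variable {𝒳 H Ω : Type*} [MeasurableSpace 𝒳] [NormedAddCommGroup H] [InnerProductSpace ℝ H]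
  {φ : 𝒳 → H} {ν : Measure 𝒳} {M : ℝ}

lemma Vstar_nonneg (φ : 𝒳 → H) (ν : Measure 𝒳) : 0 ≤ Vstar φ ν :=
  integral_nonneg fun _ => by positivity

lemma Vstar_le_sq [IsProbabilityMeasure ν] (hM : ∀ x, ‖φ x - KME φ ν‖ ≤ M) :
    Vstar φ ν ≤ M ^ 2 := by
  have hle : Vstar φ ν ≤ ∫ _, M ^ 2 ∂ν :=
    integral_mono_of_nonneg (.of_forall fun _ => by positivity) (integrable_const _)
      (.of_forall fun x => by dsimp only; gcongr; exact hM x)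
  simpa using hle

variable [SecondCountableTopology H] [MeasurableSpace H] [BorelSpace H]

lemma memLp_norm_sub_KME_sq [IsFiniteMeasure ν] (hφ : Measurable φ)
    (hM : ∀ x, ‖φ x - KME φ ν‖ ≤ M) : MemLp (fun x => ‖φ x - KME φ ν‖ ^ 2) 2 ν :=
  .of_bound (by fun_prop) (M ^ 2) (.of_forall fun x => by
    rw [norm_pow, norm_norm]; gcongr; exact hM x)

lemma integral_norm_sub_KME_sq_sq_le [IsFiniteMeasure ν] (hφ : Measurable φ)
    (hM : ∀ x, ‖φ x - KME φ ν‖ ≤ M) :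
    ∫ x, (‖φ x - KME φ ν‖ ^ 2) ^ 2 ∂ν ≤ M ^ 2 * Vstar φ ν := by
  have hmemLp := memLp_norm_sub_KME_sq hφ hM
  rw [Vstar, ← integral_const_mul]
  refine integral_mono hmemLp.integrable_sq ((hmemLp.integrable one_le_two).const_mul _)
    fun x => ?_
  dsimp only
  rw [sq (‖_‖ ^ 2)]
  gcongr
  exact hM x

variable [MeasurableSpace Ω] {P : Measure Ω} [IsProbabilityMeasure P] [IsProbabilityMeasure ν]
  {X : ℕ → Ω → 𝒳} {L : ℝ}

lemma measureReal_sum_norm_sub_KME_sq_lt_le (hφ : Measurable φ)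
    (hM : ∀ x, ‖φ x - KME φ ν‖ ≤ M) (hL : 0 ≤ L) (hX : ∀ t, HasLaw (X t) ν P)
    (hind : iIndepFun X P) (n : ℕ) :
    P.real {ω | ∑ t ∈ range n, ‖φ (X t ω) - KME φ ν‖ ^ 2
        < n * Vstar φ ν - √(2 * (n * (M ^ 2 * Vstar φ ν)) * L)} ≤ Real.exp (-L) := by
  have hmeas : Measurable fun x => ‖φ x - KME φ ν‖ ^ 2 := by fun_prop
  have hmean (t : ℕ) : ∫ ω, ‖φ (X t ω) - KME φ ν‖ ^ 2 ∂P = Vstar φ ν :=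
    (hX t).integral_comp hmeas.aestronglyMeasurable
  have hsq (t : ℕ) : ∫ ω, (‖φ (X t ω) - KME φ ν‖ ^ 2) ^ 2 ∂P ≤ M ^ 2 * Vstar φ ν :=
    ((hX t).integral_comp (hmeas.pow_const 2).aestronglyMeasurable).trans_le
      (integral_norm_sub_KME_sq_sq_le hφ hM)
  have hmemLp (t : ℕ) : MemLp (fun ω => ‖φ (X t ω) - KME φ ν‖ ^ 2) 2 P := by
    refine MemLp.comp_of_map (g := fun x => ‖φ x - KME φ ν‖ ^ 2) ?_ (hX t).aemeasurable
    rw [(hX t).map_eq]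
    exact memLp_norm_sub_KME_sq hφ hM
  have htail := measureReal_sqrt_lt_sum_integral_sub_le hL hmemLp
    (fun _ => .of_forall fun _ => sq_nonneg _) (hind.comp (fun _ => _) fun _ => hmeas) (range n)
  refine (measureReal_mono fun ω hω => ?_).trans htail
  have hsum_sq : ∑ t ∈ range n, ∫ ω, (‖φ (X t ω) - KME φ ν‖ ^ 2) ^ 2 ∂P
      ≤ n * (M ^ 2 * Vstar φ ν) := by
    simpa using sum_le_card_nsmul (range n) _ _ fun t _ => hsq t
  rw [Set.mem_ofPred_eq, lt_sub_comm] at hω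
  simp_rw [Set.mem_ofPred_eq, hmean, sum_const, card_range, nsmul_eq_mul]
  exact hω.trans_le' (by gcongr)

variable [CompleteSpace H]

lemma measureReal_lt_norm_sum_sub_KME_le (hφ : Measurable φ) (hM : ∀ x, ‖φ x - KME φ ν‖ ≤ M)
    (hL : 0 ≤ L) (hX : ∀ t, HasLaw (X t) ν P) (hind : iIndepFun X P) (n : ℕ) :
    P.real {ω | √(2 * (n * Vstar φ ν) * L) + M / 3 * L < ‖∑ t ∈ range n, (φ (X t ω) - KME φ ν)‖}
      ≤ 2 * Real.exp (-L) := by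
  have hmeas : Measurable fun x => φ x - KME φ ν := by fun_prop
  have hintegrable : Integrable (fun x => φ x - KME φ ν) ν :=
    .of_bound hmeas.aestronglyMeasurable M (.of_forall hM)
  have hφint : Integrable φ ν :=
    (hintegrable.add (integrable_const (KME φ ν))).congr (.of_forall fun _ => sub_add_cancel _ _)
  have hcentred (t : ℕ) : ∫ ω, (φ (X t ω) - KME φ ν) ∂P = 0 :=
    ((hX t).integral_comp hmeas.aestronglyMeasurable).trans (integral_sub_KME hφint)
  have hvar (t : ℕ) : ∫ ω, ‖φ (X t ω) - KME φ ν‖ ^ 2 ∂P = Vstar φ ν :=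
    (hX t).integral_comp (hmeas.norm.pow_const 2).aestronglyMeasurable
  have hM0 : 0 ≤ M :=
    (nonempty_of_isProbabilityMeasure ν).elim fun x => (norm_nonneg _).trans (hM x)
  have htail := measureReal_sqrt_add_lt_norm_sum_le hM0 hL
    (fun t => hmeas.comp_aemeasurable (hX t).aemeasurable) (fun t => .of_forall fun ω => hM (X t ω))
    (hind.comp (fun _ => _) fun _ => hmeas) hcentred (range n)
  simpa only [Function.comp_apply, hvar, sum_const, card_range, nsmul_eq_mul] using htail

theorem measureReal_lt_norm_empKME_sub_KME_le (hφ : Measurable φ) (hM : ∀ x, ‖φ x - KME φ ν‖ ≤ M)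
    (hL : 0 ≤ L) (hX : ∀ t, HasLaw (X t) ν P) (hind : iIndepFun X P) {n : ℕ} (hn : 2 ≤ n) :
    P.real {ω | √(empVar φ n fun t => X t ω) * √(2 * L / n) + 15 / 4 * M * (L / n)
        < ‖empKME φ n (fun t => X t ω) - KME φ ν‖} ≤ 3 * Real.exp (-L) := by
  set meanTail :=
    {ω | √(2 * (n * Vstar φ ν) * L) + M / 3 * L < ‖∑ t ∈ range n, (φ (X t ω) - KME φ ν)‖}
  set varTail := {ω | ∑ t ∈ range n, ‖φ (X t ω) - KME φ ν‖ ^ 2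
    < n * Vstar φ ν - √(2 * (n * (M ^ 2 * Vstar φ ν)) * L)}
  have hsub : {ω | √(empVar φ n fun t => X t ω) * √(2 * L / n) + 15 / 4 * M * (L / n)
      < ‖empKME φ n (fun t => X t ω) - KME φ ν‖} ⊆ meanTail ∪ varTail := by
    intro ω hω
    by_contra hgood
    obtain ⟨hmean, hvar⟩ : ω ∉ meanTail ∧ ω ∉ varTail := not_or.1 hgood
    have hM0 : 0 ≤ M := (norm_nonneg _).trans (hM (X 0 ω))
    exact (norm_empKME_sub_le φ hn _ _ hM0 (Vstar_nonneg φ ν) (Vstar_le_sq hM) hL (not_lt.1 hmean)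
      (not_lt.1 hvar)).not_gt hω
  calc _ ≤ P.real (meanTail ∪ varTail) := measureReal_mono hsub
    _ ≤ P.real meanTail + P.real varTail := measureReal_union_le _ _
    _ ≤ 2 * Real.exp (-L) + Real.exp (-L) :=
        add_le_add (measureReal_lt_norm_sum_sub_KME_le hφ hM hL hX hind n)
          (measureReal_sum_norm_sub_KME_sq_lt_le hφ hM hL hX hind n)
    _ = 3 * Real.exp (-L) := by ring

end EmpiricalBernstein

section Cluster

variable {𝒳 H : Type*} [NormedAddCommGroup H] [InnerProductSpace ℝ H]

/-- The empirical Bernstein radius of the first `n` points of a sample `x`: the contribution of one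
arm to `clusterThreshold`, so that `16 / 3` is half of the constant `32 / 3` there. The empirical
embedding leaves it with probability of order `exp (-L)`. -/
def confidenceRadius (φ : 𝒳 → H) (n : ℕ) (L : ℝ) (x : ℕ → 𝒳) : ℝ :=
  √(empVar φ n x) * √(2 * L / n) + 16 / 3 * √(kerRange φ) * (L / n)

lemma confidenceRadius_add_confidenceRadius (φ : 𝒳 → H) (N n : ℕ) (δ' : ℝ) (x y : ℕ → 𝒳) :
    confidenceRadius φ n (Real.log (8 * ((N : ℝ) ^ 2 - N) / δ')) x
        + confidenceRadius φ n (Real.log (8 * ((N : ℝ) ^ 2 - N) / δ')) y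
      = clusterThreshold φ N n δ' (empVar φ n x) (empVar φ n y) := by
  unfold confidenceRadius clusterThreshold
  ring

lemma clusterGraph_adj_of_norm_sub_le {φ : 𝒳 → H} {N n : ℕ} {δ' : ℝ} {x : Fin N → ℕ → 𝒳}
    {i j : Fin N} (hij : i ≠ j) {m : H}
    (hi : ‖empKME φ n (x i) - m‖
      ≤ confidenceRadius φ n (Real.log (8 * ((N : ℝ) ^ 2 - N) / δ')) (x i))
    (hj : ‖empKME φ n (x j) - m‖
      ≤ confidenceRadius φ n (Real.log (8 * ((N : ℝ) ^ 2 - N) / δ')) (x j)) :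
    (clusterGraph φ N n δ' x).Adj i j := by
  refine (SimpleGraph.fromRel_adj _ i j).2 ⟨hij, Or.inl ?_⟩
  rw [← confidenceRadius_add_confidenceRadius, ← dist_eq_norm]
  rw [← dist_eq_norm] at hi hj
  exact (dist_triangle_right _ _ m).trans (add_le_add hi hj)

variable {Ω : Type*} [MeasurableSpace 𝒳] [CompleteSpace H] [SecondCountableTopology H]
  [MeasurableSpace H] [BorelSpace H] [MeasurableSpace Ω] {P : Measure Ω} [IsProbabilityMeasure P]
  {φ : 𝒳 → H}

theorem measureReal_confidenceRadius_lt_norm_empKME_sub_le (hφmeas : Measurable φ)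
    (hφbdd : ∃ C, ∀ x, ‖φ x‖ ≤ C) {ν : Measure 𝒳} {L : ℝ} (hL : 0 ≤ L) {X : ℕ → Ω → 𝒳}
    (hX : ∀ t, HasLaw (X t) ν P) (hind : iIndepFun X P) {n : ℕ} (hn : 2 ≤ n) :
    P.real {ω | confidenceRadius φ n L (fun t => X t ω)
        < ‖empKME φ n (fun t => X t ω) - KME φ ν‖} ≤ 3 * Real.exp (-L) := by
  have : IsProbabilityMeasure ν := (hX 0).isProbabilityMeasure_iff.1 ‹_›
  have hintegrable : Integrable φ ν :=
    hφbdd.elim fun C hC => .of_bound hφmeas.aestronglyMeasurable C (.of_forall hC)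
  have hconst : 15 / 4 * √(2 * kerRange φ) ≤ 16 / 3 * √(kerRange φ) := by
    have h2 : √2 ≤ 64 / 45 := Real.sqrt_le_iff.2 (by norm_num)
    rw [Real.sqrt_mul zero_le_two]
    nlinarith [Real.sqrt_nonneg (kerRange φ)]
  refine (measureReal_mono fun ω hω => ?_).trans
    (measureReal_lt_norm_empKME_sub_KME_le hφmeas
      (fun x => norm_sub_KME_le hintegrable (norm_sub_le_sqrt_kerRange hφbdd x)) hL hX hind hn)
  rw [Set.mem_ofPred_eq] at hω ⊢
  refine lt_of_le_of_lt ?_ hω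
  unfold confidenceRadius
  gcongr

lemma natCast_mul_three_mul_exp_neg_log_le {N : ℕ} (hN : 2 ≤ N) {δ : ℝ} (hδ : 0 < δ) :
    N * (3 * Real.exp (-Real.log (8 * ((N : ℝ) ^ 2 - N) / δ))) ≤ δ := by
  have hN' : (2 : ℝ) ≤ N := by exact_mod_cast hN
  have hpos : 0 < 8 * ((N : ℝ) ^ 2 - N) := by nlinarith
  rw [Real.exp_neg, Real.exp_log (by positivity), inv_div]
  calc N * (3 * (δ / (8 * ((N : ℝ) ^ 2 - N)))) = 3 * N / (8 * ((N : ℝ) ^ 2 - N)) * δ := by ring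
    _ ≤ 1 * δ := by
        gcongr
        rw [div_le_one hpos]
        nlinarith
    _ = δ := one_mul δ

theorem cluster_type_I_error_general (hφmeas : Measurable φ) (hφbdd : ∃ C, ∀ x, ‖φ x‖ ≤ C)
    {N : ℕ} (hN : 2 ≤ N) {ν : Fin N → Measure 𝒳} {n : ℕ} (hn : 2 ≤ n) {δ' : ℝ} (hδ0 : 0 < δ')
    (hδ1 : δ' ≤ 1) {X : Fin N → ℕ → Ω → 𝒳} (hX : ∀ i t, HasLaw (X i t) (ν i) P)
    (hind : ∀ i, iIndepFun (X i) P) :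
    P {ω | ∃ i j : Fin N, i ≠ j ∧ KME φ (ν i) = KME φ (ν j) ∧
        ¬ (clusterGraph φ N n δ' (fun i t => X i t ω)).Reachable i j}
      ≤ ENNReal.ofReal δ' := by
  set L := Real.log (8 * ((N : ℝ) ^ 2 - N) / δ')
  set armTail : Fin N → Set Ω := fun i =>
    {ω | confidenceRadius φ n L (fun t => X i t ω)
      < ‖empKME φ n (fun t => X i t ω) - KME φ (ν i)‖}
  have hL : 0 ≤ L := by
    have hN' : (2 : ℝ) ≤ N := by exact_mod_cast hN
    refine Real.log_nonneg ((one_le_div hδ0).2 ?_)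
    nlinarith
  have hsub : {ω | ∃ i j : Fin N, i ≠ j ∧ KME φ (ν i) = KME φ (ν j) ∧
      ¬ (clusterGraph φ N n δ' (fun i t => X i t ω)).Reachable i j} ⊆ ⋃ i, armTail i := by
    rintro ω ⟨i, j, hij, hKME, hreach⟩
    by_contra hgood
    have hin (k : Fin N) : ω ∉ armTail k := fun hk => hgood (Set.mem_iUnion_of_mem k hk)
    exact hreach (clusterGraph_adj_of_norm_sub_le hij (not_lt.1 (hin i))
      (hKME ▸ not_lt.1 (hin j))).reachable
  refine (measure_mono hsub).trans ?_
  rw [← ofReal_measureReal]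
  refine ENNReal.ofReal_le_ofReal ?_
  calc P.real (⋃ i, armTail i) ≤ ∑ i, P.real (armTail i) := measureReal_iUnion_fintype_le _
    _ ≤ ∑ _ : Fin N, 3 * Real.exp (-L) := sum_le_sum fun i _ =>
        measureReal_confidenceRadius_lt_norm_empKME_sub_le hφmeas hφbdd hL (hX i) (hind i) hn
    _ = N * (3 * Real.exp (-L)) := by simp
    _ ≤ δ' := natCast_mul_three_mul_exp_neg_log_le hN hδ0

end Cluster

/-- (Lemma A.1, type I error of CLUSTER.) The probability that two arms with identical
kernel mean embeddings end up in different connected components of the CLUSTER graph is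
at most `δ'`. -/
theorem cluster_type_I_error
    {𝒳 H Ω : Type*} [MeasurableSpace 𝒳] [AddCommGroup 𝒳]
    [NormedAddCommGroup H] [InnerProductSpace ℝ H] [CompleteSpace H]
    [SecondCountableTopology H] [MeasurableSpace H] [BorelSpace H] [MeasurableSpace Ω]
    (P : Measure Ω) [IsProbabilityMeasure P]
    (φ : 𝒳 → H) (hφmeas : Measurable φ) (hφbdd : ∃ C : ℝ, ∀ x : 𝒳, ‖φ x‖ ≤ C)
    (hTI : ∃ Ψ : 𝒳 → ℝ, ∀ x y : 𝒳, kerG φ x y = Ψ (x - y))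
    (N : ℕ) (hN : 2 ≤ N)
    (ν : Fin N → Measure 𝒳) [∀ i, IsProbabilityMeasure (ν i)]
    (n : ℕ) (hn : 2 ≤ n) (δ' : ℝ) (hδ0 : 0 < δ') (hδ1 : δ' ≤ 1)
    (X : Fin N → ℕ → Ω → 𝒳) (hXmeas : ∀ i t, Measurable (X i t))
    (hXlaw : ∀ i t, Measure.map (X i t) P = ν i)
    (hXindep : iIndepFun
      (fun p : Fin N × ℕ => X p.1 p.2) P) :
    P {ω | ∃ i j : Fin N, i ≠ j ∧ KME φ (ν i) = KME φ (ν j) ∧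
        ¬ (clusterGraph φ N n δ' (fun i t => X i t ω)).Reachable i j}
      ≤ ENNReal.ofReal δ' := by
  exact cluster_type_I_error_general hφmeas hφbdd hN hn hδ0 hδ1
    (fun i t => ⟨(hXmeas i t).aemeasurable, hXlaw i t⟩)
    fun i => hXindep.precomp (g := Prod.mk i) (Prod.mk_right_injective i)

end
end

section
/- (Deterministic separation inequality.) Let Δ > 0, V_i ≥ 0, V_j ≥ 0, ḡ > 0, and 0 ≤ g̃ ≤ 2ḡ be real numbers, and let L > 0. If a real number n > 0 satisfies both n ≥ 128·max(V_i, V_j)·L/Δ² and n ≥ 64·√ḡ·L/Δ, then (√V_i + √V_j)·√(2L/n) + (56/3)·√g̃·(L/n) ≤ Δ − (√V_i + √V_j)·√(2L/n) − (8/3)·√ḡ·(L/n). -/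
/-!
The gap `Δ` is split into two halves. The first sample-size condition says exactly that each
product `√V * √(2 * L / n)` is at most `Δ / 8`; four of these occur in total, two on each side.
The second says that `√ḡ * (L / n) ≤ Δ / 64`. As `√2 ≤ 3 / 2`, the kernel terms amount to at most
`(56 / 3) * (3 / 2) + 8 / 3 = 92 / 3 ≤ 32` multiples of it, which fit into the other half.
-/

theorem sqrt_mul_sqrt_div_le_of_mul_div_sq_le {V L n ε : ℝ} (hV : 0 ≤ V) (hn : 0 < n) (hε : 0 < ε)
    (h : V * L / ε ^ 2 ≤ n) : √V * √(L / n) ≤ ε := by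
  rw [← Real.sqrt_mul hV, ← mul_div_assoc, Real.sqrt_le_left hε.le]
  exact (div_le_comm₀ (pow_pos hε 2) hn).mp h

theorem add_sqrt_mul_sqrt_div_le_of_max_mul_div_sq_le {V W L n ε : ℝ} (hV : 0 ≤ V) (hW : 0 ≤ W)
    (hL : 0 ≤ L) (hn : 0 < n) (hε : 0 < ε) (h : max V W * L / ε ^ 2 ≤ n) :
    (√V + √W) * √(L / n) ≤ 2 * ε := by
  have hV_le : √V * √(L / n) ≤ ε :=
    sqrt_mul_sqrt_div_le_of_mul_div_sq_le hV hn hε (le_trans (by gcongr; exact le_max_left V W) h)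
  have hW_le : √W * √(L / n) ≤ ε :=
    sqrt_mul_sqrt_div_le_of_mul_div_sq_le hW hn hε (le_trans (by gcongr; exact le_max_right V W) h)
  linarith

theorem mul_div_le_of_mul_div_le {K : Type*} [Field K] [LinearOrder K] [IsStrictOrderedRing K]
    {a L n ε : K} (hn : 0 < n) (hε : 0 < ε) (h : a * L / ε ≤ n) : a * (L / n) ≤ ε := by
  rw [← mul_div_assoc]
  exact (div_le_comm₀ hε hn).mp h

theorem sqrt_le_mul_sqrt_of_le_sq_mul {a b c : ℝ} (hc : 0 ≤ c) (h : a ≤ c ^ 2 * b) :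
    √a ≤ c * √b :=
  calc √a ≤ √(c ^ 2 * b) := Real.sqrt_le_sqrt h
    _ = c * √b := by rw [Real.sqrt_mul (sq_nonneg c), Real.sqrt_sq hc]

/-- (Deterministic separation inequality.) If `n ≥ 128 max(V_i,V_j) L / Δ²` and
`n ≥ 64 √ḡ L / Δ` then the variance-aware test threshold is dominated by the gap `Δ`:
`(√V_i + √V_j)√(2L/n) + (56/3)√g̃ (L/n) ≤ Δ − (√V_i + √V_j)√(2L/n) − (8/3)√ḡ (L/n)`. -/
theorem deterministic_separation_inequality
    (Δ Vi Vj gbar gtil L n : ℝ)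
    (hΔ : 0 < Δ) (hVi : 0 ≤ Vi) (hVj : 0 ≤ Vj) (hgbar : 0 < gbar)
    (hgtil0 : 0 ≤ gtil) (hgtil : gtil ≤ 2 * gbar) (hL : 0 < L) (hn : 0 < n)
    (h1 : n ≥ 128 * max Vi Vj * L / Δ ^ 2)
    (h2 : n ≥ 64 * Real.sqrt gbar * L / Δ) :
    (Real.sqrt Vi + Real.sqrt Vj) * Real.sqrt (2 * L / n)
        + (56 / 3) * Real.sqrt gtil * (L / n)
      ≤ Δ - (Real.sqrt Vi + Real.sqrt Vj) * Real.sqrt (2 * L / n)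
          - (8 / 3) * Real.sqrt gbar * (L / n) := by
  have variance_le : (√Vi + √Vj) * √(2 * L / n) ≤ 2 * (Δ / 8) := by
    refine add_sqrt_mul_sqrt_div_le_of_max_mul_div_sq_le hVi hVj (by positivity) hn
      (by positivity) (le_of_eq_of_le ?_ h1)
    field_simp
    ring
  have gbar_le : √gbar * (L / n) ≤ Δ / 64 := by
    refine mul_div_le_of_mul_div_le hn (by positivity) (le_of_eq_of_le ?_ h2)
    field_simp
  have sqrt_gtil_le : √gtil ≤ 3 / 2 * √gbar :=
    sqrt_le_mul_sqrt_of_le_sq_mul (by norm_num) (by linarith)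
  have gtil_le : √gtil * (L / n) ≤ 3 / 2 * (√gbar * (L / n)) := by
    rw [← mul_assoc]
    gcongr
  linarith
end

section
/- (Budget summation bound.) Let N ≥ 2 be an integer, δ ∈ (0,1], and s > 0 be real. Set k* := max(⌈log₂(128/s²)⌉, 1) and, for each integer k ≥ 1, set δ_k := δ/(4k²) and n_k := ⌈2^k · log(8(N²−N)/δ_k)⌉. Then Σ_{k=1}^{k*} N·n_k ≤ 8N · max(128/s², 1) · log(32(N²−N)·k*²/δ). -/
open Finset

/-!
The final logarithm `L = log (32 (N² - N) k*² / δ)` dominates those of all earlier iterations, and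
`2 ^ k * L ≥ 1 / 2`, so rounding up at most doubles: `n_k ≤ ⌈2 ^ k * L⌉ ≤ 2 * 2 ^ k * L`. Summing
the geometric series gives less than `4 * 2 ^ k* * L`, and rounding up in the definition of `k*`
costs one more factor of two: `2 ^ k* ≤ 2 * max (128 / s²) 1`.
-/

theorem zpow_ceil_logb_le {b x : ℝ} (hb : 1 < b) (hx : 0 < x) :
    b ^ ⌈Real.logb b x⌉ ≤ b * x := by
  have hb0 : 0 < b := one_pos.trans hb
  calc b ^ ⌈Real.logb b x⌉ = b ^ (⌈Real.logb b x⌉ : ℝ) := (Real.rpow_intCast _ _).symm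
    _ ≤ b ^ (Real.logb b x + 1) :=
        Real.rpow_le_rpow_of_exponent_le hb.le (Int.ceil_lt_add_one _).le
    _ = b * x := by rw [Real.rpow_add_one hb0.ne', Real.rpow_logb hb0 hb.ne' hx, mul_comm]

theorem zpow_max_ceil_logb_one_le {b x : ℝ} (hb : 1 < b) (hx : 0 < x) :
    b ^ max ⌈Real.logb b x⌉ 1 ≤ b * max x 1 := by
  rw [(zpow_right_mono₀ hb.le).map_max, zpow_one, mul_max_of_nonneg _ _ (one_pos.trans hb).le,
    mul_one]
  exact max_le_max_right _ (zpow_ceil_logb_le hb hx)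

theorem sum_natCeil_pow_mul_le {b K : ℕ} (hb : 2 ≤ b) {t : Finset ℕ} (ht : ∀ k ∈ t, k ≤ K)
    {l : ℕ → ℝ} {L : ℝ} (hl : ∀ k ∈ t, l k ≤ L) (hL : 2⁻¹ ≤ L) :
    ∑ k ∈ t, (⌈(b : ℝ) ^ k * l k⌉₊ : ℝ) ≤ 2 * b ^ (K + 1) * L := by
  have hL0 : 0 ≤ L := le_trans (by norm_num) hL
  have hb1 : (1 : ℝ) ≤ b := by exact_mod_cast one_le_two.trans hb
  have natCeil_le : ∀ k ∈ t, (⌈(b : ℝ) ^ k * l k⌉₊ : ℝ) ≤ 2 * L * b ^ k := fun k hk ↦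
    calc (⌈(b : ℝ) ^ k * l k⌉₊ : ℝ) ≤ ⌈(b : ℝ) ^ k * L⌉₊ := by gcongr; exact hl k hk
      _ ≤ 2 * (b ^ k * L) :=
          Nat.ceil_le_two_mul (hL.trans (le_mul_of_one_le_left hL0 (one_le_pow₀ hb1)))
      _ = 2 * L * b ^ k := by ring
  have geom_sum_le : ∑ k ∈ t, (b : ℝ) ^ k ≤ b ^ (K + 1) := by
    exact_mod_cast (Nat.geomSum_lt hb fun k hk ↦ Nat.lt_succ_of_le (ht k hk)).le
  calc ∑ k ∈ t, (⌈(b : ℝ) ^ k * l k⌉₊ : ℝ) ≤ ∑ k ∈ t, 2 * L * (b : ℝ) ^ k := sum_le_sum natCeil_le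
    _ = 2 * L * ∑ k ∈ t, (b : ℝ) ^ k := (mul_sum ..).symm
    _ ≤ 2 * L * b ^ (K + 1) := by gcongr
    _ = 2 * b ^ (K + 1) * L := by ring

theorem inv_two_le_log {x : ℝ} (hx : 2 ≤ x) : 2⁻¹ ≤ Real.log x :=
  calc (2⁻¹ : ℝ) = 1 - 2⁻¹ := by norm_num
    _ ≤ 1 - x⁻¹ := by gcongr
    _ ≤ Real.log x := Real.one_sub_inv_le_log_of_pos (two_pos.trans_le hx)

theorem inv_two_le_log_mul_pow {A y : ℝ} (hA : 2 ≤ A) (hy : 1 ≤ y) (p : ℕ) :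
    2⁻¹ ≤ Real.log (A * y ^ p) :=
  inv_two_le_log (hA.trans (le_mul_of_one_le_right (zero_le_two.trans hA) (one_le_pow₀ hy)))

theorem sum_natCeil_pow_mul_log_le {b K : ℕ} (hb : 2 ≤ b) (hK : 1 ≤ K) {A : ℝ} (hA : 2 ≤ A)
    (p : ℕ) :
    ∑ k ∈ Icc 1 K, (⌈(b : ℝ) ^ k * Real.log (A * (k : ℝ) ^ p)⌉₊ : ℝ) ≤
      2 * b ^ (K + 1) * Real.log (A * (K : ℝ) ^ p) := by
  have : 0 < A := two_pos.trans_le hA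
  refine sum_natCeil_pow_mul_le hb (fun k hk ↦ (mem_Icc.1 hk).2) (fun k hk ↦ ?_)
    (inv_two_le_log_mul_pow hA (by exact_mod_cast hK) p)
  obtain ⟨hk1, hkK⟩ := mem_Icc.1 hk
  gcongr

theorem sum_natCeil_pow_mul_log_le_max {b K : ℕ} (hb : 2 ≤ b) {x : ℝ} (hx : 0 < x)
    (hK : (K : ℤ) = max ⌈Real.logb b x⌉ 1) {A : ℝ} (hA : 2 ≤ A) (p : ℕ) :
    ∑ k ∈ Icc 1 K, (⌈(b : ℝ) ^ k * Real.log (A * (k : ℝ) ^ p)⌉₊ : ℝ) ≤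
      2 * b ^ 2 * max x 1 * Real.log (A * (K : ℝ) ^ p) := by
  have hK1 : 1 ≤ K := by exact_mod_cast hK ▸ le_max_right _ (1 : ℤ)
  have pow_le : (b : ℝ) ^ K ≤ b * max x 1 := by
    rw [← zpow_natCast, hK]
    exact zpow_max_ceil_logb_one_le (by exact_mod_cast hb) hx
  have log_nonneg : 0 ≤ Real.log (A * (K : ℝ) ^ p) :=
    le_trans (by norm_num) (inv_two_le_log_mul_pow hA (by exact_mod_cast hK1) p)
  calc ∑ k ∈ Icc 1 K, (⌈(b : ℝ) ^ k * Real.log (A * (k : ℝ) ^ p)⌉₊ : ℝ)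
      ≤ 2 * b ^ (K + 1) * Real.log (A * (K : ℝ) ^ p) := sum_natCeil_pow_mul_log_le hb hK1 hA p
    _ = 2 * b * b ^ K * Real.log (A * (K : ℝ) ^ p) := by ring
    _ ≤ 2 * b * (b * max x 1) * Real.log (A * (K : ℝ) ^ p) := by gcongr
    _ = 2 * b ^ 2 * max x 1 * Real.log (A * (K : ℝ) ^ p) := by ring

/-- (Budget summation bound.) With `k* = max(⌈log₂(128/s²)⌉, 1)`, `δ_k = δ/(4k²)` and
`n_k = ⌈2^k log(8(N²−N)/δ_k)⌉`, the total budget over the first `k*` iterations satisfies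
`Σ_{k=1}^{k*} N n_k ≤ 8N max(128/s², 1) log(32(N²−N) k*² / δ)`. -/
theorem budget_summation_bound (N : ℕ) (hN : 2 ≤ N) (δ s : ℝ)
    (hδ : 0 < δ) (hδ1 : δ ≤ 1) (hs : 0 < s)
    (kstar : ℕ) (hkstar : (kstar : ℤ) = max ⌈Real.logb 2 (128 / s ^ 2)⌉ 1)
    (n : ℕ → ℕ)
    (hn : ∀ k : ℕ, n k = ⌈(2 : ℝ) ^ k * Real.log (8 * ((N : ℝ) ^ 2 - N) / (δ / (4 * (k : ℝ) ^ 2)))⌉₊) :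
    (∑ k ∈ Icc 1 kstar, (N * n k : ℝ))
      ≤ 8 * N * max (128 / s ^ 2) 1 * Real.log (32 * ((N : ℝ) ^ 2 - N) * (kstar : ℝ) ^ 2 / δ) := by
  set A : ℝ := 32 * ((N : ℝ) ^ 2 - N) / δ with hA_def
  have hA : 2 ≤ A := by
    have hN' : (2 : ℝ) ≤ N := by exact_mod_cast hN
    rw [hA_def, le_div_iff₀ hδ]
    nlinarith
  have hn' (k : ℕ) : n k = ⌈(2 : ℝ) ^ k * Real.log (A * (k : ℝ) ^ 2)⌉₊ := by
    rw [hn, hA_def]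
    congr 3
    field
  have hsum : ∑ k ∈ Icc 1 kstar, (n k : ℝ) ≤
      2 * 2 ^ 2 * max (128 / s ^ 2) 1 * Real.log (A * (kstar : ℝ) ^ 2) := by
    simpa only [hn', Nat.cast_ofNat] using sum_natCeil_pow_mul_log_le_max le_rfl
      (by positivity) (by exact_mod_cast hkstar) hA 2
  rw [mul_div_right_comm, ← hA_def]
  calc ∑ k ∈ Icc 1 kstar, (N * n k : ℝ) = N * ∑ k ∈ Icc 1 kstar, (n k : ℝ) := (mul_sum ..).symm
    _ ≤ N * (2 * 2 ^ 2 * max (128 / s ^ 2) 1 * Real.log (A * (kstar : ℝ) ^ 2)) := by gcongr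
    _ = 8 * N * max (128 / s ^ 2) 1 * Real.log (A * (kstar : ℝ) ^ 2) := by ring
end
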